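/- Suppose two correct processes each commit wave leaders using the direct commit rule with quorum ⌊n/2⌋ + 1: if process p commits leader v of wave w at round(w,4) and process q builds a valid vertex in any round ≥ round(w+1,1), then q's vertex has a strong path to v; hence any leader of a later wave committed by q has a strong path to v. -/

import Mathlib

open Finset Relation

/-- Strong-path reachability: a chain of strong edges. -/
def strongPath {V : Type*} [DecidableEq V] (strong : V → Finset V) : V → V → Prop :=
  ReflTransGen fun a b => b ∈ strong a

/-- round(w, i) = 4(w − 1) + i -/
def roundOf (w i : ℕ) : ℕ := 4 * (w - 1) + i

/-- If a quorum of vertices of round `r` reaches `v`, then so does every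
valid vertex of a later round. -/
theorem strongPath_of_quorum {V : Type*} [DecidableEq V] [Fintype V] {n : ℕ}
    {round : V → ℕ} {strong : V → Finset V} {valid : V → Prop}
    (hedge : ∀ u x : V, x ∈ strong u → round x + 1 = round u)
    (hround : ∀ r : ℕ, (Finset.univ.filter fun x => round x = r).card ≤ n)
    (hvalid : ∀ u : V, valid u → 1 ≤ round u →
      (strong u).card ≥ n / 2 + 1 ∧ ∀ x ∈ strong u, valid x)
    {r : ℕ} {v : V} {U : Finset V} (hUr : ∀ u ∈ U, round u = r)
    (hUc : U.card ≥ n / 2 + 1) (hUpath : ∀ u ∈ U, strongPath strong u v)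
    {u : V} (hu : valid u) (hru : r + 1 ≤ round u) : strongPath strong u v := by
  obtain ⟨k, hk⟩ := Nat.exists_eq_add_of_le hru
  induction k generalizing u with
  | zero =>
    have hsub : strong u ∪ U ⊆ Finset.univ.filter fun x => round x = r := by
      intro x hx
      rw [Finset.mem_filter]
      refine ⟨Finset.mem_univ x, ?_⟩
      rcases Finset.mem_union.1 hx with hx | hx
      · have := hedge u x hx
        omega
      · exact hUr x hx
    have hcard := (Finset.card_le_card hsub).trans (hround r)
    have hsum := Finset.card_union_add_card_inter (strong u) U
    have hquorum := (hvalid u hu (by omega)).1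
    obtain ⟨x, hx⟩ : (strong u ∩ U).Nonempty := Finset.card_pos.1 (by omega)
    obtain ⟨hxu, hxU⟩ := Finset.mem_inter.1 hx
    exact ReflTransGen.head hxu (hUpath x hxU)
  | succ k ih =>
    obtain ⟨hquorum, hvalid'⟩ := hvalid u hu (by omega)
    obtain ⟨x, hx⟩ : (strong u).Nonempty := Finset.card_pos.1 (by omega)
    have hrx := hedge u x hx
    exact ReflTransGen.head hx (ih (hvalid' x hx) (by omega) (by omega))

theorem committed_leader_reached_by_later_leaders
    {V : Type*} [DecidableEq V] [Fintype V] (n : ℕ)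
    (round : V → ℕ) (strong : V → Finset V) (valid : V → Prop)
    (hedge : ∀ u x : V, x ∈ strong u → round x + 1 = round u)
    -- at most n vertices per round
    (hround : ∀ r : ℕ, (Finset.univ.filter fun x => round x = r).card ≤ n)
    -- every valid vertex of a round r+1 has at least ⌊n/2⌋+1 strong edges,
    -- all pointing to valid vertices
    (hvalid : ∀ u : V, valid u → 1 ≤ round u →
      (strong u).card ≥ n / 2 + 1 ∧ ∀ x ∈ strong u, valid x)
    (w : ℕ) (hw : 1 ≤ w) (v : V) (hv : round v = roundOf w 1) (hvvalid : valid v)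
    -- direct commit rule: a quorum of valid round(w,4) vertices has strong paths to v
    (U : Finset V) (hUr : ∀ u ∈ U, round u = roundOf w 4 ∧ valid u)
    (hUc : U.card ≥ n / 2 + 1) (hUpath : ∀ u ∈ U, strongPath strong u v) :
    -- every valid vertex of any round ≥ round(w+1,1) has a strong path to v;
    -- in particular any later wave's leader committed by another process does
    (∀ u : V, valid u → round u ≥ roundOf (w + 1) 1 → strongPath strong u v) ∧
    ∀ w' : ℕ, w < w' → ∀ u : V, valid u → round u = roundOf w' 1 →
      strongPath strong u v := by
  have key : ∀ u : V, valid u → round u ≥ roundOf (w + 1) 1 → strongPath strong u v := by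
    intro u hu hru
    refine strongPath_of_quorum hedge hround hvalid (fun x hx => (hUr x hx).1) hUc hUpath hu ?_
    simp only [roundOf] at hru ⊢
    omega
  refine ⟨key, fun w' hw' u hu hru => key u hu ?_⟩
  simp only [roundOf] at hru ⊢
  omega
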